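/- Let θ₀ ≥ 1 be an integer, d ≥ 1, and let L be a C¹ map from the closed unit disk of ℝ² minus the origin into ℝ^d such that ∫_{D_1(0)} |x|^{2θ₀} |∇L(x)|² dx < ∞ and ∫_{∂D_1(0)} |L|² dS < ∞. Then the weighted Hardy inequality θ₀² ∫_{D_1(0)} |x|^{2(θ₀ - 1)} |L(x)|² dx ≤ ∫_{D_1(0)} |x|^{2θ₀} |∇L(x)|² dx + θ₀ ∫_{∂D_1(0)} |L|² dS holds; in particular |x|^{θ₀ - 1} L ∈ L²(D_1(0)). -/

import Mathlib

open MeasureTheory Metric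
open scoped ENNReal

/-- The point of the unit circle in `ℝ²` at angle `θ`. -/
noncomputable def circlePt (θ : ℝ) : EuclideanSpace ℝ (Fin 2) :=
  (EuclideanSpace.equiv (Fin 2) ℝ).symm ![Real.cos θ, Real.sin θ]

open Set Filter Topology

/-- Weighted Hardy inequality on a compact subinterval of `(0, 1)`. -/
theorem integral_hardy_Icc {F : Type*} [NormedAddCommGroup F] [InnerProductSpace ℝ F]
    (m : ℕ) {f f' : ℝ → F} {a b : ℝ} (ha : 0 < a) (hab : a ≤ b)
    (hd : ∀ r ∈ Icc a b, HasDerivAt f (f' r) r) (hc : ContinuousOn f' (Icc a b)) :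
    (m + 1 : ℝ) ^ 2 * ∫ r in a..b, r ^ (2 * m + 1) * ‖f r‖ ^ 2 ≤
      (∫ r in a..b, r ^ (2 * m + 3) * ‖f' r‖ ^ 2) +
        (m + 1) * (b ^ (2 * m + 2) * ‖f b‖ ^ 2) := by
  have hf : ContinuousOn f (Icc a b) := fun r hr => (hd r hr).continuousAt.continuousWithinAt
  rw [← uIcc_of_le hab] at hf hc
  have hA : IntervalIntegrable (fun r => r ^ (2 * m + 1) * ‖f r‖ ^ 2) volume a b :=
    ContinuousOn.intervalIntegrable (by fun_prop)
  have hB : IntervalIntegrable (fun r => r ^ (2 * m + 3) * ‖f' r‖ ^ 2) volume a b :=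
    ContinuousOn.intervalIntegrable (by fun_prop)
  set g' : ℝ → ℝ := fun r => (2 * m + 2) * r ^ (2 * m + 1) * ‖f r‖ ^ 2
    + r ^ (2 * m + 2) * (2 * inner ℝ (f r) (f' r)) with hg'
  have hG : IntervalIntegrable g' volume a b := ContinuousOn.intervalIntegrable (by fun_prop)
  have hftc : ∫ r in a..b, g' r = b ^ (2 * m + 2) * ‖f b‖ ^ 2 - a ^ (2 * m + 2) * ‖f a‖ ^ 2 := by
    refine intervalIntegral.integral_eq_sub_of_hasDerivAt
      (f := fun r => r ^ (2 * m + 2) * ‖f r‖ ^ 2) (fun r hr => ?_) hG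
    rw [uIcc_of_le hab] at hr
    exact ((hasDerivAt_pow (2 * m + 2) r).fun_mul (hd r hr).norm_sq).congr_deriv (by simp [hg'])
  have hmono : ∫ r in a..b, ((m + 1 : ℝ) ^ 2 * (r ^ (2 * m + 1) * ‖f r‖ ^ 2)
      - r ^ (2 * m + 3) * ‖f' r‖ ^ 2) ≤ ∫ r in a..b, (m + 1 : ℝ) * g' r := by
    refine intervalIntegral.integral_mono_on hab ((hA.const_mul _).sub hB) (hG.const_mul _)
      fun r hr => ?_
    have hr0 : 0 ≤ r := ha.le.trans hr.1
    have hsq : 0 ≤ ‖(m + 1 : ℝ) • f r + r • f' r‖ ^ 2 := sq_nonneg _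
    rw [norm_add_sq_real, norm_smul, norm_smul, inner_smul_left, inner_smul_right, mul_pow,
      mul_pow, Real.norm_eq_abs, Real.norm_eq_abs, sq_abs, sq_abs] at hsq
    simp only [conj_trivial] at hsq
    have := mul_nonneg (pow_nonneg hr0 (2 * m + 1)) hsq
    simp only [hg']
    ring_nf at this ⊢
    linarith
  rw [intervalIntegral.integral_sub (hA.const_mul _) hB, intervalIntegral.integral_const_mul,
    intervalIntegral.integral_const_mul, hftc] at hmono
  have h0 : 0 ≤ (m + 1 : ℝ) * (a ^ (2 * m + 2) * ‖f a‖ ^ 2) := by positivity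
  linarith

/-- Weighted Hardy inequality on `(0, 1)`. -/
theorem lintegral_hardy_Ioo {F : Type*} [NormedAddCommGroup F] [InnerProductSpace ℝ F]
    (m : ℕ) {f f' : ℝ → F} (hf : ContinuousOn f (Ioc 0 1))
    (hd : ∀ r ∈ Ioo (0 : ℝ) 1, HasDerivAt f (f' r) r) (hc : ContinuousOn f' (Ioo 0 1)) :
    ((m + 1 : ℕ) : ℝ≥0∞) ^ 2 * ∫⁻ r in Ioo (0 : ℝ) 1, ENNReal.ofReal (r ^ (2 * m + 1) * ‖f r‖ ^ 2)
      ≤ (∫⁻ r in Ioo (0 : ℝ) 1, ENNReal.ofReal (r ^ (2 * m + 3) * ‖f' r‖ ^ 2))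
        + ((m + 1 : ℕ) : ℝ≥0∞) * ENNReal.ofReal (‖f 1‖ ^ 2) := by
  obtain ⟨a, -, ha, ha0⟩ := exists_seq_strictAnti_tendsto' (show (0 : ℝ) < 1 / 2 by norm_num)
  obtain ⟨b, -, hb, hb1⟩ := exists_seq_strictMono_tendsto' (show (1 / 2 : ℝ) < 1 by norm_num)
  have hab : ∀ i, a i ≤ b i := fun i => (ha i).2.le.trans (hb i).1.le
  have hsub : ∀ i, Icc (a i) (b i) ⊆ Ioo 0 1 := fun i =>
    Icc_subset_Ioo (ha i).1 (hb i).2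
  have hf' : ContinuousOn f (Ioo 0 1) := hf.mono Ioo_subset_Ioc_self
  have key : ∀ i, ((m + 1 : ℕ) : ℝ≥0∞) ^ 2 *
      ∫⁻ r in Ioc (a i) (b i), ENNReal.ofReal (r ^ (2 * m + 1) * ‖f r‖ ^ 2)
        ∂(volume.restrict (Ioo 0 1)) ≤
      (∫⁻ r in Ioo (0 : ℝ) 1, ENNReal.ofReal (r ^ (2 * m + 3) * ‖f' r‖ ^ 2))
        + ((m + 1 : ℕ) : ℝ≥0∞) * ENNReal.ofReal (b i ^ (2 * m + 2) * ‖f (b i)‖ ^ 2) := by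
    intro i
    have hs : Ioc (a i) (b i) ⊆ Ioo 0 1 := Ioc_subset_Icc_self.trans (hsub i)
    have conv : ∀ (k : ℕ) (u : ℝ → F), ContinuousOn u (Ioo 0 1) →
        ∫⁻ r in Ioc (a i) (b i), ENNReal.ofReal (r ^ k * ‖u r‖ ^ 2) =
          ENNReal.ofReal (∫ r in (a i)..(b i), r ^ k * ‖u r‖ ^ 2) := by
      intro k u hu
      have hu' := hu.mono (hsub i)
      rw [intervalIntegral.integral_of_le (hab i), ofReal_integral_eq_lintegral_ofReal]
      · have : ContinuousOn (fun r => r ^ k * ‖u r‖ ^ 2) (Icc (a i) (b i)) := by fun_prop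
        exact this.integrableOn_Icc.mono_set Ioc_subset_Icc_self
      · refine (ae_restrict_iff' measurableSet_Ioc).2 (ae_of_all _ fun r hr => ?_)
        have := (hs hr).1
        positivity
    have hb0 : 0 ≤ b i := (ha i).1.le.trans (hab i)
    rw [Measure.restrict_restrict measurableSet_Ioc, inter_eq_left.2 hs]
    refine le_trans ?_ (add_le_add_left (lintegral_mono_set hs) _)
    have hI : 0 ≤ ∫ r in (a i)..(b i), r ^ (2 * m + 3) * ‖f' r‖ ^ 2 :=
      intervalIntegral.integral_nonneg (hab i) fun r hr => by
        have := (hsub i hr).1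
        positivity
    rw [conv _ f hf', conv _ f' hc, ← ENNReal.ofReal_natCast,
      ← ENNReal.ofReal_pow (by positivity), ← ENNReal.ofReal_mul (by positivity),
      ← ENNReal.ofReal_mul (by positivity), ← ENNReal.ofReal_add hI (by positivity)]
    refine ENNReal.ofReal_le_ofReal ?_
    push_cast
    exact integral_hardy_Icc m (ha i).1 (hab i) (fun r hr => hd r (hsub i hr)) (hc.mono (hsub i))
  have hcov : AECover (volume.restrict (Ioo (0 : ℝ) 1)) atTop fun i => Ioc (a i) (b i) :=
    aecover_Ioo_of_Ioc ha0 hb1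
  have hmeas : AEMeasurable (fun r => ENNReal.ofReal (r ^ (2 * m + 1) * ‖f r‖ ^ 2))
      (volume.restrict (Ioo (0 : ℝ) 1)) := by
    have : ContinuousOn (fun r => r ^ (2 * m + 1) * ‖f r‖ ^ 2) (Ioo 0 1) := by fun_prop
    exact (this.aemeasurable measurableSet_Ioo).ennreal_ofReal
  have hbd : Tendsto (fun i => b i ^ (2 * m + 2) * ‖f (b i)‖ ^ 2) atTop (𝓝 (‖f 1‖ ^ 2)) := by
    have h1 : Tendsto (fun i => f (b i)) atTop (𝓝 (f 1)) :=
      (hf 1 (by simp)).tendsto.comp (tendsto_nhdsWithin_iff.2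
        ⟨hb1, Eventually.of_forall fun i => ⟨by linarith [(hb i).1], (hb i).2.le⟩⟩)
    simpa using (hb1.pow (2 * m + 2)).mul (h1.norm.pow 2)
  refine le_of_tendsto_of_tendsto' (ENNReal.Tendsto.const_mul
    (hcov.lintegral_tendsto_of_countably_generated hmeas) (Or.inr (by finiteness)))
    (tendsto_const_nhds.add (ENNReal.Tendsto.const_mul (ENNReal.tendsto_ofReal hbd)
      (Or.inr (by finiteness)))) key

theorem norm_circlePt (t : ℝ) : ‖circlePt t‖ = 1 := by
  simp [circlePt, EuclideanSpace.norm_eq]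

theorem continuous_circlePt : Continuous circlePt := by
  unfold circlePt
  refine (EuclideanSpace.equiv (Fin 2) ℝ).symm.continuous.comp (continuous_pi fun i => ?_)
  fin_cases i
  · exact Real.continuous_cos
  · exact Real.continuous_sin

theorem periodic_circlePt : Function.Periodic circlePt (2 * Real.pi) := fun t => by
  simp [circlePt]

/-- Integration over the unit disk in polar coordinates. -/
theorem setLIntegral_ball_eq_polar {G : EuclideanSpace ℝ (Fin 2) → ℝ≥0∞} (hG : Measurable G) :
    ∫⁻ x in ball 0 1, G x = ∫⁻ t in Ioo (-Real.pi) Real.pi, ∫⁻ r in Ioo (0 : ℝ) 1,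
      ENNReal.ofReal r * G (r • circlePt t) := by
  have hrepr : ∀ p : ℝ × ℝ, Complex.orthonormalBasisOneI.repr (Complex.polarCoord.symm p)
      = p.1 • circlePt p.2 := by
    intro p
    ext i
    fin_cases i <;> simp [Complex.polarCoord_symm_apply, circlePt,
      Complex.cos_ofReal_re, Complex.sin_ofReal_re]
  have hmeas : Measurable fun p : ℝ × ℝ =>
      ENNReal.ofReal p.1 * (ball 0 1).indicator G (p.1 • circlePt p.2) := by
    refine (ENNReal.measurable_ofReal.comp measurable_fst).mul
      ((hG.indicator measurableSet_ball).comp ?_)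
    exact (continuous_fst.smul (continuous_circlePt.comp continuous_snd)).measurable
  rw [← lintegral_indicator measurableSet_ball,
    ← Complex.orthonormalBasisOneI.measurePreserving_repr.lintegral_comp
      (hG.indicator measurableSet_ball), ← Complex.lintegral_comp_polarCoord_symm]
  simp only [hrepr, smul_eq_mul, polarCoord_target]
  rw [Measure.volume_eq_prod, ← Measure.prod_restrict, lintegral_prod_symm _ hmeas.aemeasurable]
  refine lintegral_congr fun t => ?_
  rw [← lintegral_indicator measurableSet_Ioi, ← lintegral_indicator measurableSet_Ioo]
  refine lintegral_congr fun r => ?_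
  by_cases h0 : 0 < r
  · by_cases h1 : r < 1 <;>
      simp [indicator, norm_smul, norm_circlePt, h0, h1, abs_of_pos h0]
  · simp [h0]

theorem setLIntegral_Ioo_eq_of_periodic {u : ℝ → ℝ≥0∞} (hu : Function.Periodic u (2 * Real.pi)) :
    ∫⁻ t in Ioo (-Real.pi) Real.pi, u t = ∫⁻ t in Ioc 0 (2 * Real.pi), u t := by
  rw [setLIntegral_congr Ioo_ae_eq_Ioc]
  have h1 := isAddFundamentalDomain_Ioc Real.two_pi_pos (-Real.pi)
  have h2 := isAddFundamentalDomain_Ioc Real.two_pi_pos 0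
  rw [show -Real.pi + 2 * Real.pi = Real.pi by ring] at h1
  rw [zero_add] at h2
  refine h1.setLIntegral_eq h2 u ?_
  rintro ⟨g, hg⟩ x
  obtain ⟨k, rfl⟩ := AddSubgroup.mem_zmultiples_iff.1 hg
  rw [AddSubgroup.mk_vadd, vadd_eq_add, add_comm]
  exact hu.zsmul k x

/-- Weighted Hardy inequality on the unit disk: for a `C¹` map `L` on the
closed unit disk minus the origin with `∫ |x|^{2θ₀} |∇L|² < ∞` and `∫_{∂D_1} |L|² < ∞`,
`θ₀² ∫ |x|^{2(θ₀-1)} |L|² ≤ ∫ |x|^{2θ₀} |∇L|² + θ₀ ∫_{∂D_1} |L|²`. -/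
theorem stmt5 (θ₀ d : ℕ) (hθ : 1 ≤ θ₀) (hd : 1 ≤ d)
    (L : EuclideanSpace ℝ (Fin 2) → EuclideanSpace ℝ (Fin d))
    (hL : ContDiffOn ℝ 1 L (closedBall (0 : EuclideanSpace ℝ (Fin 2)) 1 \ {0}))
    (h1 : ∫⁻ x in ball (0 : EuclideanSpace ℝ (Fin 2)) 1,
        ENNReal.ofReal (‖x‖ ^ (2 * θ₀) * ‖fderiv ℝ L x‖ ^ 2) < ⊤)
    (h2 : ∫⁻ θ in Set.Ioc (0 : ℝ) (2 * Real.pi),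
        ENNReal.ofReal (‖L (circlePt θ)‖ ^ 2) < ⊤) :
    (θ₀ : ℝ≥0∞) ^ 2 * ∫⁻ x in ball (0 : EuclideanSpace ℝ (Fin 2)) 1,
        ENNReal.ofReal (‖x‖ ^ (2 * (θ₀ - 1)) * ‖L x‖ ^ 2)
      ≤ (∫⁻ x in ball (0 : EuclideanSpace ℝ (Fin 2)) 1,
            ENNReal.ofReal (‖x‖ ^ (2 * θ₀) * ‖fderiv ℝ L x‖ ^ 2))
        + (θ₀ : ℝ≥0∞) * ∫⁻ θ in Set.Ioc (0 : ℝ) (2 * Real.pi),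
            ENNReal.ofReal (‖L (circlePt θ)‖ ^ 2) := by
  obtain ⟨m, rfl⟩ := Nat.exists_eq_add_of_le' hθ
  rw [Nat.add_sub_cancel]
  set U : Set (EuclideanSpace ℝ (Fin 2)) := ball 0 1 \ {0}
  have hUo : IsOpen U := isOpen_ball.sdiff isClosed_singleton
  have hLU : ContDiffOn ℝ 1 L U := hL.mono (sdiff_subset_sdiff_left ball_subset_closedBall)
  have hnorm : ∀ t, ∀ r ∈ Ioo (0 : ℝ) 1, ‖r • circlePt t‖ = r := fun t r hr => by
    rw [norm_smul, norm_circlePt, mul_one, Real.norm_of_nonneg hr.1.le]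
  have hmem : ∀ t, ∀ r ∈ Ioo (0 : ℝ) 1, r • circlePt t ∈ U := by
    refine fun t r hr => ⟨by simpa [hnorm t r hr] using hr.2, fun h => hr.1.ne' ?_⟩
    rw [← hnorm t r hr, mem_singleton_iff.1 h, norm_zero]
  set G : EuclideanSpace ℝ (Fin 2) → ℝ≥0∞ :=
    U.indicator fun x => ENNReal.ofReal (‖x‖ ^ (2 * m) * ‖L x‖ ^ 2) with hGdef
  have hG : Measurable G := by
    have hcont : ContinuousOn (fun x => ENNReal.ofReal (‖x‖ ^ (2 * m) * ‖L x‖ ^ 2)) U := by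
      have := hLU.continuousOn
      exact ENNReal.continuous_ofReal.comp_continuousOn (by fun_prop)
    classical
    rw [hGdef, ← piecewise_eq_indicator]
    exact hcont.measurable_piecewise continuousOn_const hUo.measurableSet
  have hH : Measurable fun x : EuclideanSpace ℝ (Fin 2) =>
      ENNReal.ofReal (‖x‖ ^ (2 * (m + 1)) * ‖fderiv ℝ L x‖ ^ 2) :=
    ((measurable_norm.pow_const _).mul ((measurable_fderiv ℝ L).norm.pow_const _)).ennreal_ofReal
  have hLG : ∫⁻ x in ball (0 : EuclideanSpace ℝ (Fin 2)) 1,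
      ENNReal.ofReal (‖x‖ ^ (2 * m) * ‖L x‖ ^ 2) =
      ∫⁻ x in ball (0 : EuclideanSpace ℝ (Fin 2)) 1, G x := by
    refine setLIntegral_congr_fun_ae measurableSet_ball ?_
    filter_upwards [Measure.ae_ne volume (0 : EuclideanSpace ℝ (Fin 2))] with x hx hxb
    have hxU : x ∈ U := ⟨hxb, hx⟩
    rw [hGdef, indicator_of_mem hxU]
  rw [hLG, setLIntegral_ball_eq_polar hG, setLIntegral_ball_eq_polar hH,
    ← setLIntegral_Ioo_eq_of_periodic (u := fun t => ENNReal.ofReal (‖L (circlePt t)‖ ^ 2))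
      (periodic_circlePt.comp fun x => ENNReal.ofReal (‖L x‖ ^ 2)),
    ← lintegral_const_mul' _ _ (by finiteness), ← lintegral_const_mul' _ _ (by finiteness)]
  refine le_trans (lintegral_mono fun t => ?_) (lintegral_add_left ?_ _).le
  · have hray : Continuous fun r : ℝ => r • circlePt t := by fun_prop
    have hfd : ∀ r ∈ Ioo (0 : ℝ) 1, HasDerivAt (fun r : ℝ => L (r • circlePt t))
        (fderiv ℝ L (r • circlePt t) (circlePt t)) r := fun r hr =>
      ((hLU.differentiableOn one_ne_zero).differentiableAt
        (hUo.mem_nhds (hmem t r hr))).hasFDerivAt.comp_hasDerivAt r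
          (by simpa using (hasDerivAt_id r).smul_const (circlePt t))
    have hf : ContinuousOn (fun r : ℝ => L (r • circlePt t)) (Ioc 0 1) := by
      refine hL.continuousOn.comp hray.continuousOn fun r hr => ⟨?_, ?_⟩
      · simpa [norm_smul, norm_circlePt, abs_of_pos hr.1] using hr.2
      · have : circlePt t ≠ 0 := norm_ne_zero_iff.1 (by simp [norm_circlePt])
        simp [hr.1.ne', this]
    have hf' : ContinuousOn (fun r : ℝ => fderiv ℝ L (r • circlePt t) (circlePt t)) (Ioo 0 1) :=
      ((hLU.continuousOn_fderiv_of_isOpen hUo le_rfl).comp hray.continuousOn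
        (hmem t)).clm_apply continuousOn_const
    have hardy := lintegral_hardy_Ioo m hf hfd hf'
    rw [one_smul] at hardy
    refine le_trans (le_of_eq ?_) (hardy.trans (add_le_add_left ?_ _))
    · congr 1
      refine setLIntegral_congr_fun measurableSet_Ioo fun r hr => ?_
      simp only [hGdef, indicator_of_mem (hmem t r hr), hnorm t r hr]
      rw [← ENNReal.ofReal_mul hr.1.le]
      ring_nf
    · refine setLIntegral_mono' measurableSet_Ioo fun r hr => ?_
      rw [← ENNReal.ofReal_mul hr.1.le, hnorm t r hr]
      refine ENNReal.ofReal_le_ofReal ?_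
      have hle : ‖fderiv ℝ L (r • circlePt t) (circlePt t)‖ ≤ ‖fderiv ℝ L (r • circlePt t)‖ := by
        simpa [norm_circlePt] using (fderiv ℝ L (r • circlePt t)).le_opNorm (circlePt t)
      have hr0 := hr.1.le
      calc r ^ (2 * m + 3) * ‖fderiv ℝ L (r • circlePt t) (circlePt t)‖ ^ 2
          ≤ r ^ (2 * m + 3) * ‖fderiv ℝ L (r • circlePt t)‖ ^ 2 := by gcongr
        _ = r * (r ^ (2 * (m + 1)) * ‖fderiv ℝ L (r • circlePt t)‖ ^ 2) := by ring
  · have hray : Measurable fun p : ℝ × ℝ => p.2 • circlePt p.1 :=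
      (continuous_snd.smul (continuous_circlePt.comp continuous_fst)).measurable
    exact Measurable.lintegral_prod_right'
      ((ENNReal.measurable_ofReal.comp measurable_snd).mul (hH.comp hray))
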